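/- Let X = (0,1)^d be the open unit cube in ℝ^d with closure X̄ = [0,1]^d and boundary ∂X. Let π : X̄ → ℝ be continuously differentiable with π > 0 on X and ∫_{X̄} π dλ = 1 (λ = Lebesgue measure), and let φ : X̄ → ℝ^d be continuously differentiable with π(x) φ(x) = 0 for every x ∈ ∂X. Then ∫_X [∇·φ(x) + φ(x)·∇ log π(x)] π(x) dx = 0. -/

import Mathlib

open MeasureTheory Set

/-- **Stein's identity on the unit cube.**
Let `X = (0,1)^d` with closure `[0,1]^d`.  If `π` is `C¹` on the closed cube, positive on the
open cube, integrates to one, and `φ` is a `C¹` vector field with `π x • φ x = 0` on the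
boundary of the cube, then the Stein operator
`S_π[φ](x) = ∇·φ(x) + φ(x)·∇ log π(x)` integrates to zero against the density `π`. -/
theorem stein_operator_integrates_to_zero_cube
    (d : ℕ) (hd : 0 < d)
    (X : Set (EuclideanSpace ℝ (Fin d)))
    (hX : X = {x : EuclideanSpace ℝ (Fin d) | ∀ i, x i ∈ Set.Ioo (0 : ℝ) 1})
    (π : EuclideanSpace ℝ (Fin d) → ℝ)
    (φ : EuclideanSpace ℝ (Fin d) → EuclideanSpace ℝ (Fin d))
    (hπ : ContDiffOn ℝ 1 π (closure X))
    (hπpos : ∀ x ∈ X, 0 < π x)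
    (hπint : ∫ x in closure X, π x = 1)
    (hφ : ContDiffOn ℝ 1 φ (closure X))
    (hbound : ∀ x ∈ frontier X, π x • φ x = 0) :
    ∫ x in X,
      ((∑ i, fderiv ℝ φ x (EuclideanSpace.single i 1) i) +
        fderiv ℝ (fun y => Real.log (π y)) x (φ x)) * π x = 0 := by
  obtain ⟨n, rfl⟩ : ∃ n, d = n + 1 := ⟨d - 1, by omega⟩
  let L := PiLp.continuousLinearEquiv 2 ℝ (fun _ : Fin (n + 1) => ℝ)
  have hX1 : X = L ⁻¹' (Set.pi univ fun _ => Ioo (0 : ℝ) 1) := by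
    rw [hX]; ext x; simp [L]
  have hXo : IsOpen X := by
    rw [hX1]
    exact (isOpen_set_pi finite_univ fun _ _ => isOpen_Ioo).preimage L.continuous
  have hcl : closure X = L ⁻¹' (Icc 0 1) := by
    have h := L.toHomeomorph.preimage_closure (Set.pi univ fun _ => Ioo (0 : ℝ) 1)
    rw [closure_pi_set] at h
    simp only [closure_Ioo (zero_ne_one' ℝ)] at h
    rw [hX1]
    refine h.symm.trans ?_
    rw [Set.pi_univ_Icc]; rfl
  have hsub : X ⊆ closure X := subset_closure
  have hXne : X.Nonempty := ⟨L.symm (fun _ => 1 / 2), by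
    rw [hX1]; simp [L]; norm_num⟩
  have hconv : Convex ℝ (closure X) := by
    rw [hcl]
    exact (convex_Icc (0 : Fin (n + 1) → ℝ) 1).linear_preimage L.toLinearEquiv.toLinearMap
  have hud : UniqueDiffOn ℝ (closure X) :=
    uniqueDiffOn_convex hconv (hXne.mono (interior_maximal hsub hXo))
  let F : EuclideanSpace ℝ (Fin (n + 1)) → EuclideanSpace ℝ (Fin (n + 1)) := fun x => π x • φ x
  have hF : ContDiffOn ℝ 1 F (closure X) := hπ.smul hφ
  have hF' : ContinuousOn (fderivWithin ℝ F (closure X)) (closure X) :=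
    hF.continuousOn_fderivWithin hud le_rfl
  have hmaps : MapsTo L.symm (Icc 0 1) (closure X) := by
    intro y hy; rw [hcl]; simpa using hy
  let f : (Fin (n + 1) → ℝ) → (Fin (n + 1) → ℝ) := fun y => L (F (L.symm y))
  let f' : (Fin (n + 1) → ℝ) → (Fin (n + 1) → ℝ) →L[ℝ] (Fin (n + 1) → ℝ) := fun y =>
    (L : _ →L[ℝ] _).comp ((fderivWithin ℝ F (closure X) (L.symm y)).comp (L.symm : _ →L[ℝ] _))
  have hfc : ContinuousOn f (Icc 0 1) :=
    L.continuous.comp_continuousOn (hF.continuousOn.comp L.symm.continuous.continuousOn hmaps)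
  have hf'c : ContinuousOn f' (Icc 0 1) :=
    continuousOn_const.clm_comp
      ((hF'.comp L.symm.continuous.continuousOn hmaps).clm_comp continuousOn_const)
  have hnhds : ∀ x ∈ X, closure X ∈ nhds x := fun x hx =>
    Filter.mem_of_superset (hXo.mem_nhds hx) hsub
  have hFd : ∀ x ∈ X, HasFDerivAt F (fderivWithin ℝ F (closure X) x) x := fun x hx =>
    ((hF.differentiableOn one_ne_zero x (hsub hx)).hasFDerivWithinAt).hasFDerivAt (hnhds x hx)
  have hdiv := integral_divergence_of_hasFDerivAt_off_countable (a := (0 : Fin (n + 1) → ℝ))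
    (b := 1) zero_le_one f f' ∅ countable_empty hfc
    (by
      rintro y ⟨hy, -⟩
      have hy' : L.symm y ∈ X := by rw [hX1]; simpa using hy
      exact L.hasFDerivAt.comp y ((hFd _ hy').comp y L.symm.hasFDerivAt))
    (by
      refine ContinuousOn.integrableOn_compact isCompact_Icc ?_
      refine continuousOn_finsetSum _ fun i _ => ?_
      exact (continuous_apply i).comp_continuousOn (hf'c.clm_apply continuousOn_const))
  have hface : ∀ (i : Fin (n + 1)) (c : ℝ), (c = 0 ∨ c = 1) →
      ∀ z ∈ Icc (0 : Fin n → ℝ) 1, f (i.insertNth c z) = 0 := by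
    intro i c hc z hz
    have hmem : L.symm (i.insertNth c z) ∈ frontier X := by
      rw [frontier, hXo.interior_eq]
      refine ⟨hmaps ?_, ?_⟩
      · rw [Fin.insertNth_mem_Icc]
        refine ⟨?_, hz⟩
        rcases hc with rfl | rfl <;> simp
      · rw [hX1]
        intro h
        have := h i (mem_univ i)
        rcases hc with rfl | rfl <;> simp at this
    simp only [f, F]
    rw [hbound _ hmem, map_zero]
  have hzero : ∫ y in Icc (0 : Fin (n + 1) → ℝ) 1, ∑ i, f' y (Pi.single i 1) i = 0 := by
    rw [hdiv]
    refine Finset.sum_eq_zero fun i _ => ?_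
    have h1 : ∀ c : ℝ, (c = 0 ∨ c = 1) →
        ∫ z in Icc (0 : Fin n → ℝ) 1, f (i.insertNth c z) i = 0 := fun c hc => by
      rw [setIntegral_congr_fun measurableSet_Icc
        (g := fun _ => (0 : ℝ)) (fun z hz => by simp [hface i c hc z hz])]
      simp
    have ha := h1 0 (Or.inl rfl)
    have hb := h1 1 (Or.inr rfl)
    exact (congrArg₂ (· - ·) hb ha).trans (sub_zero 0)
  have hcongr : ∀ x ∈ X, ((∑ i, fderiv ℝ φ x (EuclideanSpace.single i 1) i) +
        fderiv ℝ (fun y => Real.log (π y)) x (φ x)) * π x =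
        ∑ i, f' (L x) (Pi.single i 1) i := by
    intro x hx
    have hπd : DifferentiableAt ℝ π x :=
      (hπ.differentiableOn one_ne_zero x (hsub hx)).differentiableAt (hnhds x hx)
    have hφd : DifferentiableAt ℝ φ x :=
      (hφ.differentiableOn one_ne_zero x (hsub hx)).differentiableAt (hnhds x hx)
    have hne := (hπpos x hx).ne'
    have e1 : fderivWithin ℝ F (closure X) x =
        π x • fderiv ℝ φ x + (fderiv ℝ π x).smulRight (φ x) :=
      (hFd x hx).unique (hπd.hasFDerivAt.smul hφd.hasFDerivAt)
    have e2 : fderiv ℝ (fun y => Real.log (π y)) x = (π x)⁻¹ • fderiv ℝ π x :=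
      (hπd.hasFDerivAt.log hne).fderiv
    have e3 : ∀ i, L.symm (Pi.single i 1) = EuclideanSpace.single i (1 : ℝ) := fun i => rfl
    have e4 : φ x = ∑ i, φ x i • EuclideanSpace.single i (1 : ℝ) := by
      ext j; simp [Finset.sum_apply, Pi.single_apply]
    have e5 : fderiv ℝ π x (φ x) =
        ∑ i, φ x i * fderiv ℝ π x (EuclideanSpace.single i 1) := by
      conv_lhs => rw [e4]
      simp [map_sum]
    have e6 : ∀ i, f' (L x) (Pi.single i 1) i =
        π x * fderiv ℝ φ x (EuclideanSpace.single i 1) i +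
          φ x i * fderiv ℝ π x (EuclideanSpace.single i 1) := by
      intro i
      have : f' (L x) (Pi.single i 1) i =
        (fderivWithin ℝ F (closure X) x (EuclideanSpace.single i 1)) i := rfl
      rw [this, e1]
      simp [mul_comm]
    simp only [e6]
    rw [Finset.sum_add_distrib, ← Finset.mul_sum, ← e5, e2]
    simp only [ContinuousLinearMap.smul_apply, smul_eq_mul]
    field_simp
  rw [setIntegral_congr_fun hXo.measurableSet hcongr, hX1]
  have hmp : MeasurePreserving L := PiLp.volume_preserving_ofLp (Fin (n + 1))
  rw [hmp.setIntegral_preimage_emb L.toHomeomorph.measurableEmbedding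
    (fun y => ∑ i, f' y (Pi.single i 1) i)]
  refine Eq.trans (setIntegral_congr_set ?_) hzero
  exact Measure.univ_pi_Ioo_ae_eq_Icc (μ := fun _ : Fin (n + 1) => (volume : Measure ℝ))
    (f := 0) (g := 1)
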